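/- arXiv:1910.07950 — 6 statements merged into one kernel-verified Lean document; each statement's English description precedes it below -/
import Mathlib

section
/- Let G be a finite simple graph, and let (L,S,R) and (L*,S*,R*) be separation triples in G such that |S*| ≤ |S'| for every separation triple (L',S',R') of G (i.e., (L*,S*,R*) is an optimal separation triple). Suppose S ∩ R* = ∅, x ∈ S ∩ L*, and y ∈ L ∩ R*. Then: (1) N(L ∩ R*) ⊆ S* \ R; (2) S* is an (x,y)-vertex-cut in G; (3) S* ∩ R = ∅. -/
/-- A separation triple `(L, S, R)` in a graph `G`: a partition of the vertex set into
three sets with `L` and `R` nonempty and no edge between `L` and `R`. -/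
def IsSepTriple {V : Type*} (G : SimpleGraph V) (L S R : Finset V) : Prop :=
  L.Nonempty ∧ R.Nonempty ∧
    (∀ v, v ∈ L ∨ v ∈ S ∨ v ∈ R) ∧
    Disjoint L S ∧ Disjoint L R ∧ Disjoint S R ∧
    ∀ u ∈ L, ∀ v ∈ R, ¬ G.Adj u v

/-- `N(U)`: the set of vertices outside `U` adjacent to some vertex of `U`. -/
def setNbrs {V : Type*} (G : SimpleGraph V) (U : Finset V) : Set V :=
  {v | v ∉ U ∧ ∃ u ∈ U, G.Adj u v}

/-!
Two crossing separations yield a corner separation that cuts `L ∩ R*` off from `R ∪ L*`. When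
`S ∩ R*` is empty its separator shrinks to `S* \ R`: this contains `N(L ∩ R*)`, and since it lies
inside `S*`, minimality of `S*` forces it to be all of `S*`.
-/

section

variable {V : Type*} {G : SimpleGraph V} {L S R Ls Ss Rs : Finset V}

namespace IsSepTriple

theorem setNbrs_subset (h : IsSepTriple G L S R) : setNbrs G L ⊆ ↑S := by
  obtain ⟨-, -, hcover, -, -, -, hnoAdj⟩ := h
  rintro v ⟨hvL, u, hu, huv⟩
  have hvR : v ∉ R := fun hv => hnoAdj u hu v hv huv
  exact ((hcover v).resolve_left hvL).resolve_right hvR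

theorem corner [DecidableEq V] (h : IsSepTriple G L S R) (hs : IsSepTriple G Ls Ss Rs)
    (hne : (L ∩ Rs).Nonempty) :
    IsSepTriple G (L ∩ Rs) (Ss \ R ∪ S ∩ Rs) (R ∪ Ls) := by
  obtain ⟨-, hR, hcover, hLS, hLR, hSR, hnoAdj⟩ := h
  obtain ⟨-, -, hcovers, hLSs, hLRs, hSRs, hnoAdjs⟩ := hs
  rw [Finset.disjoint_left] at hLS hLR hSR hLSs hLRs hSRs
  refine ⟨hne, hR.mono Finset.subset_union_left, fun v => ?_, ?_, ?_, ?_, fun u hu v hv huv => ?_⟩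
  · grind
  · exact Finset.disjoint_left.2 (by grind)
  · exact Finset.disjoint_left.2 (by grind)
  · exact Finset.disjoint_left.2 (by grind)
  · obtain ⟨huL, huRs⟩ := Finset.mem_inter.1 hu
    rcases Finset.mem_union.1 hv with hvR | hvLs
    · exact hnoAdj u huL v hvR huv
    · exact hnoAdjs v hvLs u huRs huv.symm

theorem corner_of_inter_eq_empty [DecidableEq V] (h : IsSepTriple G L S R)
    (hs : IsSepTriple G Ls Ss Rs) (hSRs : S ∩ Rs = ∅) (hne : (L ∩ Rs).Nonempty) :
    IsSepTriple G (L ∩ Rs) (Ss \ R) (R ∪ Ls) := by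
  simpa only [hSRs, Finset.union_empty] using h.corner hs hne

end IsSepTriple

theorem collection_of_facts_general [DecidableEq V] {x y : V}
    (h : IsSepTriple G L S R) (hs : IsSepTriple G Ls Ss Rs)
    (hmin : ∀ L' S' R' : Finset V, IsSepTriple G L' S' R' → S' ⊆ Ss → S' = Ss)
    (hSRs : S ∩ Rs = ∅) (hx : x ∈ Ls) (hy : y ∈ L ∩ Rs) :
    setNbrs G (L ∩ Rs) ⊆ ↑(Ss \ R) ∧
    (∃ A B : Finset V, IsSepTriple G A Ss B ∧ x ∈ A ∧ y ∈ B) ∧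
    Ss ∩ R = ∅ := by
  have hcorner : IsSepTriple G (L ∩ Rs) (Ss \ R) (R ∪ Ls) :=
    h.corner_of_inter_eq_empty hs hSRs ⟨y, hy⟩
  have hsdiff : Ss \ R = Ss := hmin _ _ _ hcorner Finset.sdiff_subset
  exact ⟨hcorner.setNbrs_subset, ⟨Ls, Rs, hs, hx, Finset.mem_of_mem_inter_right hy⟩,
    Finset.disjoint_iff_inter_eq_empty.1 (Finset.sdiff_eq_self_iff_disjoint.1 hsdiff)⟩

end

/-- Let `(L, S, R)` and `(L*, S*, R*)` be separation triples with `(L*, S*, R*)`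
optimal (i.e. `|S*| ≤ |S'|` for every separation triple `(L', S', R')`).
If `S ∩ R* = ∅`, `x ∈ S ∩ L*` and `y ∈ L ∩ R*`, then
(1) `N(L ∩ R*) ⊆ S* \ R`; (2) `S*` is an `(x, y)`-vertex-cut in `G`; and
(3) `S* ∩ R = ∅`. -/
theorem collection_of_facts {V : Type*} [Fintype V] [DecidableEq V]
    (G : SimpleGraph V) (L S R Ls Ss Rs : Finset V) (x y : V)
    (h1 : IsSepTriple G L S R) (h2 : IsSepTriple G Ls Ss Rs)
    (hopt : ∀ L' S' R' : Finset V, IsSepTriple G L' S' R' → Ss.card ≤ S'.card)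
    (hSR : S ∩ Rs = ∅) (hx : x ∈ S ∩ Ls) (hy : y ∈ L ∩ Rs) :
    setNbrs G (L ∩ Rs) ⊆ ↑(Ss \ R) ∧
    (∃ A B : Finset V, IsSepTriple G A Ss B ∧ x ∈ A ∧ y ∈ B) ∧
    Ss ∩ R = ∅ := by
  exact collection_of_facts_general h1 h2
    (fun L' S' R' h hsub => Finset.eq_of_subset_of_card_le hsub (hopt L' S' R' h))
    hSR (Finset.mem_of_mem_inter_right hx) hy
end

section
/- Let G be a finite simple graph on vertex set V, let 0 < φ ≤ 1 and c ≥ 1 be real numbers, and let (u_i, v_i), i ∈ I, be a finite family of pairs of vertices (the edges of a demand multigraph W) such that for every nonempty set A ⊆ V with |A| ≤ |V \ A|, the number of indices i with exactly one of u_i, v_i in A is at least φ·|A| (i.e., W has sparsity at least φ). Suppose that for each i there is a walk P_i in G from u_i to v_i such that every vertex of G lies on at most c of the walks P_i (i.e., W can be embedded into G with vertex congestion c). Then every separation triple (L,S,R) of G satisfies h(L,S,R) ≥ φ/(2c); that is, h(G) ≥ φ/(2c). -/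
/-!
Every demand crossing `L` is routed by a walk that, up to reversal, leaves `L`, and since `L`
has no neighbours in `R`, it does so through a vertex of `S`. Each vertex of `S` serves at
most `c` demands, so when `|L| ≤ |R|` sparsity gives `φ|L| ≤ c|S|`. Symmetrically for `R`, so
that `φm ≤ c|S|` for `m = min(|L|, |R|)`. Adding `φ|S|` to both sides yields the bound
`φ / (φ + c)`, which is at least `φ / (2c)` as soon as `φ ≤ c`.
-/

open Finset

section Demands

variable {V I : Type*} [DecidableEq V] [Fintype I] {G : SimpleGraph V} {u v : I → V}

/-- The edges of the demand multigraph with edges `(u i, v i)` that leave the vertex set `A`,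
represented by their indices so that parallel demands are counted separately. -/
def crossingDemands (u v : I → V) (A : Finset V) : Finset I :=
  {i | (u i ∈ A ∧ v i ∉ A) ∨ (u i ∉ A ∧ v i ∈ A)}

/-- The demands whose routing walk visits the vertex `x`. A walk visiting `x` several times
counts once. -/
def demandsThrough (P : ∀ i, G.Walk (u i) (v i)) (x : V) : Finset I :=
  {i | x ∈ (P i).support}

/-- The demand multigraph with edges `(u i, v i)` has sparsity at least `φ`: each nonempty set
containing at most half of the vertices is left by at least `φ` demands per vertex. -/
def HasSparsity [Fintype V] (u v : I → V) (φ : ℝ) : Prop :=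
  ∀ A : Finset V, A.Nonempty → #A ≤ #Aᶜ → φ * #A ≤ #(crossingDemands u v A)

/-- The routing `P` of the demands has vertex congestion at most `c`. -/
def HasCongestion (P : ∀ i, G.Walk (u i) (v i)) (c : ℝ) : Prop :=
  ∀ x, (#(demandsThrough P x) : ℝ) ≤ c

theorem HasCongestion.nonneg [Nonempty V] {P : ∀ i, G.Walk (u i) (v i)} {c : ℝ}
    (hP : HasCongestion P c) : 0 ≤ c :=
  (Nat.cast_nonneg _).trans (hP (Classical.arbitrary V))

theorem HasCongestion.card_biUnion_demandsThrough_le [DecidableEq I]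
    {P : ∀ i, G.Walk (u i) (v i)} {c : ℝ} (hP : HasCongestion P c) (S : Finset V) :
    (#(S.biUnion (demandsThrough P)) : ℝ) ≤ c * #S :=
  calc (#(S.biUnion (demandsThrough P)) : ℝ)
    _ ≤ ∑ x ∈ S, (#(demandsThrough P x) : ℝ) := mod_cast card_biUnion_le
    _ ≤ #S • c := sum_le_card_nsmul S _ c fun x _ => hP x
    _ = c * #S := by rw [nsmul_eq_mul, mul_comm]

end Demands

namespace IsSepTriple

variable {V : Type*} {G : SimpleGraph V} {L S R : Finset V}

theorem symm (h : IsSepTriple G L S R) : IsSepTriple G R S L := by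
  obtain ⟨hL, hR, hcover, hLS, hLR, hSR, hnadj⟩ := h
  exact ⟨hR, hL, fun x => by have := hcover x; tauto, hSR.symm, hLR.symm, hLS.symm,
    fun x hx y hy hxy => hnadj y hy x hx hxy.symm⟩

theorem mem_separator_of_adj (h : IsSepTriple G L S R) {a b : V} (hab : G.Adj a b)
    (ha : a ∈ L) (hb : b ∉ L) : b ∈ S := by
  obtain ⟨-, -, hcover, -, -, -, hnadj⟩ := h
  exact ((hcover b).resolve_left hb).resolve_right fun hbR => hnadj a ha b hbR hab

theorem exists_mem_separator_mem_support (h : IsSepTriple G L S R) {a b : V} (p : G.Walk a b)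
    (ha : a ∈ L) (hb : b ∉ L) : ∃ x ∈ S, x ∈ p.support := by
  obtain ⟨d, hd, hfst, hsnd⟩ := p.exists_boundary_dart L ha hb
  exact ⟨d.snd, h.mem_separator_of_adj d.adj hfst hsnd, p.dart_snd_mem_support_of_mem_darts hd⟩

theorem card_left_le_card_compl [Fintype V] [DecidableEq V] (h : IsSepTriple G L S R)
    (hle : #L ≤ #R) : #L ≤ #Lᶜ := by
  obtain ⟨-, -, -, -, hLR, -⟩ := h
  exact hle.trans (card_le_card (subset_compl_iff_disjoint_left.mpr hLR))

variable {I : Type*} [Fintype I] [DecidableEq V] {u v : I → V} {φ c : ℝ}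

theorem crossingDemands_subset [DecidableEq I] (h : IsSepTriple G L S R)
    (P : ∀ i, G.Walk (u i) (v i)) :
    crossingDemands u v L ⊆ S.biUnion (demandsThrough P) := by
  intro i hi
  simp only [crossingDemands, demandsThrough, mem_filter_univ, mem_biUnion] at hi ⊢
  rcases hi with ⟨hu, hv⟩ | ⟨hu, hv⟩
  · exact h.exists_mem_separator_mem_support (P i) hu hv
  · simpa only [SimpleGraph.Walk.support_reverse, List.mem_reverse] using
      h.exists_mem_separator_mem_support (P i).reverse hv hu

theorem card_crossingDemands_le (h : IsSepTriple G L S R) {P : ∀ i, G.Walk (u i) (v i)}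
    (hP : HasCongestion P c) : (#(crossingDemands u v L) : ℝ) ≤ c * #S := by
  classical
  calc (#(crossingDemands u v L) : ℝ)
    _ ≤ #(S.biUnion (demandsThrough P)) := mod_cast card_le_card (h.crossingDemands_subset P)
    _ ≤ c * #S := hP.card_biUnion_demandsThrough_le S

variable [Fintype V]

theorem mul_card_left_le (h : IsSepTriple G L S R) (hW : HasSparsity u v φ)
    {P : ∀ i, G.Walk (u i) (v i)} (hP : HasCongestion P c) (hle : #L ≤ #R) :
    φ * #L ≤ c * #S :=
  (hW L h.1 (h.card_left_le_card_compl hle)).trans (h.card_crossingDemands_le hP)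

theorem mul_min_card_le (h : IsSepTriple G L S R) (hW : HasSparsity u v φ)
    {P : ∀ i, G.Walk (u i) (v i)} (hP : HasCongestion P c) :
    φ * min (#L : ℝ) #R ≤ c * #S := by
  rcases le_total #L #R with hle | hle
  · rw [min_eq_left (mod_cast hle)]
    exact h.mul_card_left_le hW hP hle
  · rw [min_eq_right (mod_cast hle)]
    exact h.symm.mul_card_left_le hW hP hle

end IsSepTriple

theorem embedding_lower_bounds_expansion_general {V I : Type*} [Fintype V] [DecidableEq V]
    [Fintype I] {G : SimpleGraph V} {u v : I → V} {φ c : ℝ} (hφ : 0 < φ)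
    (hW : HasSparsity u v φ) {P : ∀ i, G.Walk (u i) (v i)} (hP : HasCongestion P c)
    {L S R : Finset V} (h : IsSepTriple G L S R) :
    φ / (φ + c) ≤ (#S : ℝ) / (min (#L : ℝ) #R + #S) := by
  have hL : (0 : ℝ) < #L := mod_cast h.1.card_pos
  have hR : (0 : ℝ) < #R := mod_cast h.2.1.card_pos
  have hc : 0 ≤ c := have : Nonempty V := h.1.to_type; hP.nonneg
  rw [div_le_div_iff₀ (by positivity) (by positivity)]
  linarith [h.mul_min_card_le hW hP]

/-- **Expander embedding lower-bounds vertex expansion.**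
Let `(u i, v i)`, `i ∈ I`, be the edges of a demand multigraph `W` of sparsity at
least `φ` (every nonempty `A` with `|A| ≤ |Aᶜ|` is crossed by at least `φ·|A|`
demands), and suppose each demand can be routed by a walk `P i` in `G` so that every
vertex lies on at most `c` of the walks.  Then every separation triple `(L, S, R)` of
`G` has vertex expansion `h(L, S, R) = |S| / (min(|L|, |R|) + |S|) ≥ φ / (2c)`. -/
theorem embedding_lower_bounds_expansion {V : Type*} [Fintype V] [DecidableEq V]
    (G : SimpleGraph V) {I : Type*} [Fintype I] (u v : I → V) (φ c : ℝ)
    (hφ0 : 0 < φ) (hφ1 : φ ≤ 1) (hc : 1 ≤ c)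
    (hsparse : ∀ A : Finset V, A.Nonempty → A.card ≤ Aᶜ.card →
      φ * (A.card : ℝ) ≤
        ((Finset.univ.filter
          (fun i => (u i ∈ A ∧ v i ∉ A) ∨ (u i ∉ A ∧ v i ∈ A))).card : ℝ))
    (P : ∀ i, G.Walk (u i) (v i))
    (hcong : ∀ x : V,
      ((Finset.univ.filter (fun i => x ∈ (P i).support)).card : ℝ) ≤ c) :
    ∀ L S R : Finset V, IsSepTriple G L S R →
      φ / (2 * c) ≤ (S.card : ℝ) / ((min L.card R.card : ℝ) + (S.card : ℝ)) := by
  intro L S R h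
  exact (div_le_div_of_nonneg_left hφ0.le (by linarith) (by linarith)).trans
    (embedding_lower_bounds_expansion_general hφ0 hsparse hcong h)
end

section
/- Let G = (V,E) be a finite graph with m edges, let φ1, φ2 ∈ (0,1) and c ≥ 4 be real numbers, and let S ⊆ V be a ((c·φ2 + φ1)/(c − 1))-near-expander φ1-conductance cut of G. Then S is a (φ2, c)-most-balanced φ1-conductance cut of G; that is, every set T ⊆ V with vol(T) ≤ m and conductance Φ(T) ≤ φ2 satisfies vol(T) ≤ c·vol(S). -/
/-- The volume of a vertex set: the sum of degrees of its vertices. -/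
def gVol {V : Type*} [Fintype V] (G : SimpleGraph V) [DecidableRel G.Adj]
    (U : Finset V) : ℕ :=
  ∑ x ∈ U, G.degree x

/-- `|E(A, B)|`: the number of edges with one endpoint in `A` and the other in `B`
(counted as ordered pairs with the first endpoint in `A`; for disjoint `A`, `B`
this is exactly the number of crossing edges). -/
def cutBetween {V : Type*} [Fintype V] [DecidableEq V] (G : SimpleGraph V)
    [DecidableRel G.Adj] (A B : Finset V) : ℕ :=
  (Finset.univ.filter (fun p : V × V => p.1 ∈ A ∧ p.2 ∈ B ∧ G.Adj p.1 p.2)).card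

/-- Conductance of a cut `S`: `|E(S, V \ S)| / min(vol S, vol (V \ S))`. -/
noncomputable def conduct {V : Type*} [Fintype V] [DecidableEq V] (G : SimpleGraph V)
    [DecidableRel G.Adj] (S : Finset V) : ℝ :=
  (cutBetween G S Sᶜ : ℝ) / (min (gVol G S) (gVol G Sᶜ) : ℝ)

/-- `A` is a nearly `φ`-expander in `G`: every `T ⊆ A` with `vol T ≤ vol A / 2`
satisfies `|E(T, V \ T)| ≥ φ · vol T`. -/
def NearlyExpander {V : Type*} [Fintype V] [DecidableEq V] (G : SimpleGraph V)
    [DecidableRel G.Adj] (φ : ℝ) (A : Finset V) : Prop :=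
  ∀ T ⊆ A, (gVol G T : ℝ) ≤ (gVol G A : ℝ) / 2 →
    φ * (gVol G T : ℝ) ≤ (cutBetween G T Tᶜ : ℝ)

/-!
Uncrossing: removing `S` from a set `W` leaves a set `W \ S ⊆ Sᶜ` whose boundary edges all come from
the boundaries of `W` and `S`, and whose volume is at least `vol W - vol S`. One of `T \ S` and
`Tᶜ \ S` fills at most half of `Sᶜ`, so near-expansion of `Sᶜ` applies to it; since
`vol T ≤ vol Tᶜ`, either choice yields `φ (vol T - vol S) ≤ |∂S| + |∂T|`. If `|∂S| ≤ φ1 vol S` and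
`|∂T| ≤ φ2 vol T`, the value `φ = (c φ2 + φ1) / (c - 1)` is the one for which this rearranges to
`vol T ≤ c vol S`.
-/

section Volume

variable {V : Type*} [Fintype V] [DecidableEq V] (G : SimpleGraph V) [DecidableRel G.Adj]

theorem gVol_add_gVol_compl (A : Finset V) :
    gVol G A + gVol G Aᶜ = 2 * G.edgeFinset.card :=
  (Finset.sum_add_sum_compl A _).trans G.sum_degrees_eq_twice_card_edges

variable {G} in
theorem gVol_le_gVol_compl {A : Finset V} (hA : gVol G A ≤ G.edgeFinset.card) :
    gVol G A ≤ gVol G Aᶜ := by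
  have := gVol_add_gVol_compl G A
  lia

theorem gVol_le_gVol_sdiff_add (A B : Finset V) : gVol G A ≤ gVol G (A \ B) + gVol G B :=
  calc gVol G A ≤ gVol G (A ∪ B) := Finset.sum_le_sum_of_subset Finset.subset_union_left
    _ = gVol G (A \ B) + gVol G B := by
      rw [← Finset.sdiff_union_self_eq_union]
      exact Finset.sum_union Finset.sdiff_disjoint

theorem gVol_sdiff_add_gVol_compl_sdiff (A B : Finset V) :
    gVol G (A \ B) + gVol G (Aᶜ \ B) = gVol G Bᶜ := by
  have hdisj : Disjoint (A \ B) (Aᶜ \ B) :=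
    disjoint_compl_right.mono Finset.sdiff_subset Finset.sdiff_subset
  rw [gVol, gVol, ← Finset.sum_union hdisj, ← Finset.union_sdiff_distrib, Finset.union_compl,
    ← Finset.compl_eq_univ_sdiff, gVol]

end Volume

section Cut

variable {V : Type*} [Fintype V] [DecidableEq V] (G : SimpleGraph V) [DecidableRel G.Adj]

theorem cutBetween_eq_card_interedges (A B : Finset V) :
    cutBetween G A B = (G.interedges A B).card := by
  unfold cutBetween
  congr 1
  ext p
  simp only [Finset.mem_filter_univ, SimpleGraph.mem_interedges_iff]

theorem cutBetween_comm (A B : Finset V) : cutBetween G A B = cutBetween G B A := by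
  simp only [cutBetween_eq_card_interedges]
  have := G.symm
  exact Rel.card_interedges_comm A B

theorem cutBetween_le_gVol (A B : Finset V) : cutBetween G A B ≤ gVol G A := by
  have hvol : gVol G A = (A.sigma fun v => G.neighborFinset v).card := by
    simp only [gVol, Finset.card_sigma, SimpleGraph.card_neighborFinset_eq_degree]
  rw [hvol, cutBetween]
  refine Finset.card_le_card_of_injOn (fun p => ⟨p.1, p.2⟩) ?_ ?_
  · intro p hp
    simp_all
  · rintro ⟨a, b⟩ - ⟨a', b'⟩ - h
    simpa using h

theorem cutBetween_sdiff_compl_le (A B : Finset V) :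
    cutBetween G (A \ B) (A \ B)ᶜ ≤ cutBetween G A Aᶜ + cutBetween G B Bᶜ := by
  rw [cutBetween_comm G B]
  refine le_trans (Finset.card_le_card ?_) (Finset.card_union_le _ _)
  intro p
  simp only [Finset.mem_filter_univ, Finset.mem_union, Finset.mem_compl, Finset.mem_sdiff]
  tauto

variable {G}

theorem conduct_mul_gVol {A : Finset V} (hA : gVol G A ≤ G.edgeFinset.card) :
    conduct G A * gVol G A = cutBetween G A Aᶜ := by
  have hmin : min (gVol G A : ℝ) (gVol G Aᶜ) = gVol G A :=
    min_eq_left (mod_cast gVol_le_gVol_compl hA)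
  have hcut : (gVol G A : ℝ) = 0 → (cutBetween G A Aᶜ : ℝ) = 0 := by
    have := cutBetween_le_gVol G A Aᶜ
    norm_cast
    lia
  rw [conduct, hmin, div_mul_cancel_of_imp hcut]

theorem cutBetween_compl_le_of_conduct_le {A : Finset V} {φ : ℝ}
    (hA : gVol G A ≤ G.edgeFinset.card) (h : conduct G A ≤ φ) :
    (cutBetween G A Aᶜ : ℝ) ≤ φ * gVol G A :=
  (conduct_mul_gVol hA).symm.trans_le (mul_le_mul_of_nonneg_right h (Nat.cast_nonneg _))

end Cut

namespace NearlyExpander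

variable {V : Type*} [Fintype V] [DecidableEq V] {G : SimpleGraph V} [DecidableRel G.Adj]
  {S T : Finset V} {φ : ℝ}

theorem mul_gVol_sub_le_of_gVol_sdiff_le_half (hS : NearlyExpander G φ Sᶜ) (hφ : 0 ≤ φ)
    (hhalf : (gVol G (T \ S) : ℝ) ≤ (gVol G Sᶜ : ℝ) / 2) :
    φ * ((gVol G T : ℝ) - gVol G S) ≤ cutBetween G T Tᶜ + cutBetween G S Sᶜ := by
  have hvol : (gVol G T : ℝ) - gVol G S ≤ gVol G (T \ S) :=
    sub_le_iff_le_add.2 (mod_cast gVol_le_gVol_sdiff_add G T S)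
  have hsub : T \ S ⊆ Sᶜ := fun v hv => Finset.mem_compl.2 (Finset.mem_sdiff.1 hv).2
  calc φ * ((gVol G T : ℝ) - gVol G S) ≤ φ * gVol G (T \ S) := by gcongr
    _ ≤ cutBetween G (T \ S) (T \ S)ᶜ := hS _ hsub hhalf
    _ ≤ cutBetween G T Tᶜ + cutBetween G S Sᶜ := mod_cast cutBetween_sdiff_compl_le G T S

theorem mul_gVol_sub_le (hS : NearlyExpander G φ Sᶜ) (hφ : 0 ≤ φ)
    (hT : gVol G T ≤ G.edgeFinset.card) :
    φ * ((gVol G T : ℝ) - gVol G S) ≤ cutBetween G T Tᶜ + cutBetween G S Sᶜ := by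
  rcases le_or_gt (gVol G (T \ S) : ℝ) ((gVol G Sᶜ : ℝ) / 2) with hhalf | hhalf
  · exact hS.mul_gVol_sub_le_of_gVol_sdiff_le_half hφ hhalf
  · have hsplit : (gVol G (T \ S) : ℝ) + gVol G (Tᶜ \ S) = gVol G Sᶜ :=
      mod_cast gVol_sdiff_add_gVol_compl_sdiff G T S
    have hhalf' : (gVol G (Tᶜ \ S) : ℝ) ≤ (gVol G Sᶜ : ℝ) / 2 := by linarith
    have hcompl : (gVol G T : ℝ) ≤ gVol G Tᶜ := mod_cast gVol_le_gVol_compl hT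
    calc φ * ((gVol G T : ℝ) - gVol G S) ≤ φ * ((gVol G Tᶜ : ℝ) - gVol G S) := by gcongr
      _ ≤ cutBetween G Tᶜ Tᶜᶜ + cutBetween G S Sᶜ :=
        hS.mul_gVol_sub_le_of_gVol_sdiff_le_half hφ hhalf'
      _ = cutBetween G T Tᶜ + cutBetween G S Sᶜ := by rw [compl_compl, cutBetween_comm]

theorem gVol_le_mul_gVol {φ1 φ2 c : ℝ} (hφ1 : 0 < φ1) (hφ2 : 0 < φ2) (hc : 1 < c)
    (hS : NearlyExpander G ((c * φ2 + φ1) / (c - 1)) Sᶜ)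
    (hcutS : (cutBetween G S Sᶜ : ℝ) ≤ φ1 * gVol G S)
    (hT : gVol G T ≤ G.edgeFinset.card)
    (hcutT : (cutBetween G T Tᶜ : ℝ) ≤ φ2 * gVol G T) :
    (gVol G T : ℝ) ≤ c * gVol G S := by
  have hc' : 0 < c - 1 := sub_pos.2 hc
  have hφ : 0 ≤ (c * φ2 + φ1) / (c - 1) := by positivity
  have hexp : (c * φ2 + φ1) / (c - 1) * ((gVol G T : ℝ) - gVol G S) ≤
      φ2 * gVol G T + φ1 * gVol G S :=
    (hS.mul_gVol_sub_le hφ hT).trans (add_le_add hcutT hcutS)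
  rw [div_mul_eq_mul_div, div_le_iff₀ hc'] at hexp
  refine le_of_mul_le_mul_left ?_ (add_pos hφ1 hφ2)
  linarith

end NearlyExpander

/-- **Near-expander cuts are most-balanced.**  Let `G` have `m` edges, let
`φ1, φ2 ∈ (0,1)`, `c ≥ 4`, and let `S` be a
`((c·φ2 + φ1)/(c − 1))`-near-expander `φ1`-conductance cut: `vol S ≤ m`,
`Φ(S) ≤ φ1`, and either `vol S ≥ m/4` or `V \ S` is a nearly
`((c·φ2 + φ1)/(c − 1))`-expander.  Then `S` is a `(φ2, c)`-most-balanced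
`φ1`-conductance cut: every `T` with `vol T ≤ m` and `Φ(T) ≤ φ2` has
`vol T ≤ c · vol S`. -/
theorem near_expander_most_balanced {V : Type*} [Fintype V] [DecidableEq V]
    (G : SimpleGraph V) [DecidableRel G.Adj] (φ1 φ2 c : ℝ)
    (hφ1 : 0 < φ1) (hφ1' : φ1 < 1) (hφ2 : 0 < φ2) (hφ2' : φ2 < 1) (hc : 4 ≤ c)
    (S : Finset V)
    (hvolS : gVol G S ≤ G.edgeFinset.card)
    (hcond : conduct G S ≤ φ1)
    (hne : (G.edgeFinset.card : ℝ) / 4 ≤ (gVol G S : ℝ) ∨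
      NearlyExpander G ((c * φ2 + φ1) / (c - 1)) Sᶜ) :
    ∀ T : Finset V, gVol G T ≤ G.edgeFinset.card → conduct G T ≤ φ2 →
      (gVol G T : ℝ) ≤ c * (gVol G S : ℝ) := by
  intro T hT hcondT
  rcases hne with hlarge | hexp
  · calc (gVol G T : ℝ) ≤ G.edgeFinset.card := mod_cast hT
      _ ≤ 4 * gVol G S := by linarith
      _ ≤ c * gVol G S := by gcongr
  · have hcutS := cutBetween_compl_le_of_conduct_le hvolS hcond
    have hcutT := cutBetween_compl_le_of_conduct_le hT hcondT
    exact hexp.gVol_le_mul_gVol hφ1 hφ2 (by linarith) hcutS hT hcutT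
end

section
/- Let G = (V,E) be a finite graph in which every vertex has degree at least 1, let p : V → ℝ be any function, and for a real number t let V_{≥t} = {v ∈ V : p(v)/deg(v) ≥ t}. Suppose t_med < t are real numbers such that at least half of the edges in E(V_{≥t}, V \ V_{≥t}) have their endpoint outside V_{≥t} lying in V_{≥t_med}. Then vol(V_{≥t_med}) ≥ vol(V_{≥t}) + |E(V_{≥t}, V \ V_{≥t})| / 2. -/
/-- The level set `V_{≥ t} = {v : p(v)/deg(v) ≥ t}`. -/
noncomputable def levelSet {V : Type*} [Fintype V] (G : SimpleGraph V)
    [DecidableRel G.Adj] (p : V → ℝ) (t : ℝ) : Finset V :=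
  Finset.univ.filter (fun x => t ≤ p x / (G.degree x : ℝ))

section

variable {V : Type*} [Fintype V] (G : SimpleGraph V) [DecidableRel G.Adj]

theorem levelSet_antitone (p : V → ℝ) : Antitone (levelSet G p) := fun _ _ hst =>
  Finset.monotone_filter_right _ fun _ _ ht => hst.trans ht

variable [DecidableEq V]

theorem gVol_sdiff_add_gVol {A B : Finset V} (hAB : A ⊆ B) :
    gVol G (B \ A) + gVol G A = gVol G B :=
  Finset.sum_sdiff hAB

theorem cutBetween_eq_sum_card_inter_neighborFinset (A B : Finset V) :
    cutBetween G A B = ∑ b ∈ B, (A ∩ G.neighborFinset b).card := by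
  have card_inter_neighborFinset (b : V) :
      (A ∩ G.neighborFinset b).card = ∑ a ∈ A, if G.Adj a b then 1 else 0 := by
    rw [← Finset.card_filter]
    congr 1
    ext a
    simp [G.adj_comm]
  have cut_pairs : Finset.univ.filter (fun e : V × V => e.1 ∈ A ∧ e.2 ∈ B ∧ G.Adj e.1 e.2) =
      (A ×ˢ B).filter (fun e => G.Adj e.1 e.2) := by
    ext e
    simp [and_assoc]
  simp only [cutBetween, cut_pairs, Finset.card_filter, Finset.sum_product_right,
    card_inter_neighborFinset]

theorem cutBetween_le_gVol_right (A B : Finset V) : cutBetween G A B ≤ gVol G B := by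
  rw [cutBetween_eq_sum_card_inter_neighborFinset]
  refine Finset.sum_le_sum fun b _ => ?_
  rw [← G.card_neighborFinset_eq_degree]
  exact Finset.card_le_card Finset.inter_subset_right

theorem gVol_add_cutBetween_sdiff_le {A B : Finset V} (hAB : A ⊆ B) :
    gVol G A + cutBetween G A (B \ A) ≤ gVol G B :=
  calc gVol G A + cutBetween G A (B \ A)
      ≤ gVol G A + gVol G (B \ A) := by gcongr; exact cutBetween_le_gVol_right G A (B \ A)
    _ = gVol G B := by rw [add_comm, gVol_sdiff_add_gVol G hAB]

theorem median_expansion_general {A B : Finset V} (hAB : A ⊆ B)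
    (hhalf : cutBetween G A Aᶜ ≤ 2 * cutBetween G A (Aᶜ ∩ B)) :
    (gVol G A : ℝ) + (cutBetween G A Aᶜ : ℝ) / 2 ≤ (gVol G B : ℝ) := by
  have compl_inter : Aᶜ ∩ B = B \ A := by rw [Finset.inter_comm, Finset.sdiff_eq_inter_compl]
  rw [compl_inter] at hhalf
  have half_cut_le : (cutBetween G A Aᶜ : ℝ) / 2 ≤ cutBetween G A (B \ A) := by
    rw [div_le_iff₀' two_pos]
    exact_mod_cast hhalf
  calc (gVol G A : ℝ) + (cutBetween G A Aᶜ : ℝ) / 2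
      ≤ gVol G A + cutBetween G A (B \ A) := by gcongr
    _ ≤ gVol G B := by exact_mod_cast gVol_add_cutBetween_sdiff_le G hAB

end

/-- **Median expansion.**  Suppose every vertex has degree at least `1`,
`t_med < t`, and at least half of the edges of `E(V_{≥t}, V \ V_{≥t})` have their
endpoint outside `V_{≥t}` lying in `V_{≥t_med}`.  Then
`vol(V_{≥t_med}) ≥ vol(V_{≥t}) + |E(V_{≥t}, V \ V_{≥t})| / 2`. -/
theorem median_expansion {V : Type*} [Fintype V] [DecidableEq V]
    (G : SimpleGraph V) [DecidableRel G.Adj]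
    (hdeg : ∀ v : V, 1 ≤ G.degree v)
    (p : V → ℝ) (t tmed : ℝ) (ht : tmed < t)
    (hhalf : cutBetween G (levelSet G p t) (levelSet G p t)ᶜ ≤
      2 * cutBetween G (levelSet G p t) ((levelSet G p t)ᶜ ∩ levelSet G p tmed)) :
    (gVol G (levelSet G p t) : ℝ) +
      (cutBetween G (levelSet G p t) (levelSet G p t)ᶜ : ℝ) / 2 ≤
      (gVol G (levelSet G p tmed) : ℝ) :=
  median_expansion_general G (levelSet_antitone G p ht.le) hhalf
end

section
/- Let G = (V,E) be a finite graph with m ≥ 1 edges, let p : V → ℝ_{≥0} satisfy Σ_{v∈V} p(v) = 1, and let C ⊆ V satisfy vol(C) ≤ m and p(C) ≥ 1 − 1/200, where p(U) = Σ_{v∈U} p(v). Define the excess exc(v) = p(v) − deg(v)/(2m) and let S = {v ∈ V : exc(v) ≥ deg(v)/(100m)}. Then Σ_{v∈S} exc(v) ≥ 1/10 and vol(S) ≤ 1.5·m. -/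
/-- The excess of vertex `v` with respect to `p`: `exc(v) = p(v) − deg(v)/(2m)`. -/
noncomputable def exc {V : Type*} [Fintype V] [DecidableEq V] (G : SimpleGraph V)
    [DecidableRel G.Adj] (p : V → ℝ) (v : V) : ℝ :=
  p v - (G.degree v : ℝ) / (2 * (G.edgeFinset.card : ℝ))

/-- The set `S = {v : exc(v) ≥ deg(v)/(100 m)}`. -/
noncomputable def excSet {V : Type*} [Fintype V] [DecidableEq V] (G : SimpleGraph V)
    [DecidableRel G.Adj] (p : V → ℝ) : Finset V :=
  Finset.univ.filter
    (fun v => (G.degree v : ℝ) / (100 * (G.edgeFinset.card : ℝ)) ≤ exc G p v)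

/-! `S` is the set where `f v = exc v - deg v / (100 m)` is nonnegative, so it maximises
`∑ v ∈ U, f v` over all vertex sets `U`. Hence
`exc(S) ≥ f(S) ≥ f(C) = p(C) - (51/100) vol(C)/m ≥ 0.995 - 0.51`.
For the volume, every vertex of `S` has `deg v / m ≤ (100/51) p v`, so `S \ C` has volume at most
`(100/51) m p(V \ C) ≤ m/102`. -/

theorem sum_le_sum_filter_nonneg {ι M : Type*} [AddCommMonoid M] [LinearOrder M]
    [IsOrderedAddMonoid M] {s t : Finset ι} (f : ι → M) (hst : s ⊆ t) :
    ∑ i ∈ s, f i ≤ ∑ i ∈ t with 0 ≤ f i, f i := by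
  have drop_negative : ∑ i ∈ s, f i ≤ ∑ i ∈ s with 0 ≤ f i, f i := by
    rw [Finset.sum_filter]
    refine Finset.sum_le_sum fun i _ => ?_
    split_ifs with h
    · exact le_rfl
    · exact (not_le.mp h).le
  exact drop_negative.trans <|
    Finset.sum_le_sum_of_subset_of_nonneg (Finset.filter_subset_filter _ hst)
      fun i hi _ => (Finset.mem_filter.mp hi).2

theorem sum_le_sum_add_sum_compl_of_le {ι M : Type*} [Fintype ι] [DecidableEq ι] [AddCommMonoid M]
    [PartialOrder M] [IsOrderedAddMonoid M] {s : Finset ι} {w q : ι → M} {t : Finset ι}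
    (hw : ∀ i ∈ t, 0 ≤ w i) (hq : ∀ i ∈ tᶜ, 0 ≤ q i) (hwq : ∀ i ∈ s \ t, w i ≤ q i) :
    ∑ i ∈ s, w i ≤ ∑ i ∈ t, w i + ∑ i ∈ tᶜ, q i := by
  calc ∑ i ∈ s, w i = ∑ i ∈ s ∩ t, w i + ∑ i ∈ s \ t, w i :=
        (Finset.sum_inter_add_sum_sdiff s t w).symm
    _ ≤ ∑ i ∈ s ∩ t, w i + ∑ i ∈ s \ t, q i := by
        gcongr with i hi
        exact hwq i hi
    _ ≤ ∑ i ∈ t, w i + ∑ i ∈ tᶜ, q i := by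
        have inter_subset : s ∩ t ⊆ t := Finset.inter_subset_right
        have sdiff_subset : s \ t ⊆ tᶜ := fun i hi =>
          Finset.mem_compl.mpr (Finset.mem_sdiff.mp hi).2
        exact add_le_add
          (Finset.sum_le_sum_of_subset_of_nonneg inter_subset fun i hi _ => hw i hi)
          (Finset.sum_le_sum_of_subset_of_nonneg sdiff_subset fun i hi _ => hq i hi)

section Excess

variable {V : Type*} [Fintype V] (G : SimpleGraph V) [DecidableRel G.Adj]

theorem gVol_div (U : Finset V) (c : ℝ) :
    (gVol G U : ℝ) / c = ∑ v ∈ U, (G.degree v : ℝ) / c := by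
  rw [gVol, Nat.cast_sum, Finset.sum_div]

variable [DecidableEq V] (p : V → ℝ)

theorem exc_sub_degree_div (v : V) :
    exc G p v - G.degree v / (100 * G.edgeFinset.card) =
      p v - 51 / 100 * (G.degree v / G.edgeFinset.card) := by
  rw [exc]
  ring

theorem excSet_eq_filter_nonneg :
    excSet G p = Finset.univ.filter
      fun v => 0 ≤ p v - 51 / 100 * ((G.degree v : ℝ) / G.edgeFinset.card) := by
  simp only [excSet, ← exc_sub_degree_div, sub_nonneg]

theorem degree_div_le_of_mem_excSet {v : V} (hv : v ∈ excSet G p) :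
    (G.degree v : ℝ) / G.edgeFinset.card ≤ 100 / 51 * p v := by
  rw [excSet_eq_filter_nonneg, Finset.mem_filter] at hv
  linarith [hv.2]

theorem sum_sub_gVol_div_le_sum_exc (C : Finset V) :
    ∑ v ∈ C, p v - 51 / 100 * ((gVol G C : ℝ) / G.edgeFinset.card) ≤
      ∑ v ∈ excSet G p, exc G p v := by
  calc ∑ v ∈ C, p v - 51 / 100 * ((gVol G C : ℝ) / G.edgeFinset.card)
      = ∑ v ∈ C, (p v - 51 / 100 * ((G.degree v : ℝ) / G.edgeFinset.card)) := by
        rw [gVol_div, Finset.sum_sub_distrib, Finset.mul_sum]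
    _ ≤ ∑ v ∈ excSet G p, (p v - 51 / 100 * ((G.degree v : ℝ) / G.edgeFinset.card)) := by
        rw [excSet_eq_filter_nonneg]
        exact sum_le_sum_filter_nonneg _ (Finset.subset_univ C)
    _ ≤ ∑ v ∈ excSet G p, exc G p v := by
        refine Finset.sum_le_sum fun v _ => ?_
        rw [← exc_sub_degree_div]
        exact sub_le_self _ (by positivity)

theorem gVol_excSet_div_le {p : V → ℝ} {C : Finset V} (hp : ∀ v ∈ Cᶜ, 0 ≤ p v) :
    (gVol G (excSet G p) : ℝ) / G.edgeFinset.card ≤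
      gVol G C / G.edgeFinset.card + 100 / 51 * ∑ v ∈ Cᶜ, p v := by
  rw [gVol_div, gVol_div, Finset.mul_sum]
  exact sum_le_sum_add_sum_compl_of_le (fun v _ => by positivity)
    (fun v hv => mul_nonneg (by norm_num) (hp v hv))
    (fun v hv => degree_div_le_of_mem_excSet G p (Finset.mem_sdiff.mp hv).1)

end Excess

/-- Let `G` have `m ≥ 1` edges, let `p : V → ℝ≥0` with `Σ p = 1`, and suppose
`C ⊆ V` satisfies `vol C ≤ m` and `p(C) ≥ 1 − 1/200`.  Then the set
`S = {v : exc(v) ≥ deg(v)/(100m)}` satisfies `exc(S) ≥ 1/10` and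
`vol S ≤ 1.5·m`. -/
theorem big_excess_set {V : Type*} [Fintype V] [DecidableEq V]
    (G : SimpleGraph V) [DecidableRel G.Adj]
    (hm : 1 ≤ G.edgeFinset.card)
    (p : V → ℝ) (hp0 : ∀ v, 0 ≤ p v) (hpsum : ∑ v, p v = 1)
    (C : Finset V) (hvolC : gVol G C ≤ G.edgeFinset.card)
    (hpC : 1 - 1 / 200 ≤ ∑ v ∈ C, p v) :
    ((1 : ℝ) / 10 ≤ ∑ v ∈ excSet G p, exc G p v) ∧
    ((gVol G (excSet G p) : ℝ) ≤ 1.5 * (G.edgeFinset.card : ℝ)) := by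
  have hm_pos : (0 : ℝ) < G.edgeFinset.card := by exact_mod_cast hm
  have volC_div_le : (gVol G C : ℝ) / G.edgeFinset.card ≤ 1 :=
    (div_le_one hm_pos).mpr (by exact_mod_cast hvolC)
  constructor
  · linarith [sum_sub_gVol_div_le_sum_exc G p C]
  · have p_compl_le : ∑ v ∈ Cᶜ, p v ≤ 1 / 200 := by
      linarith [Finset.sum_add_sum_compl C p]
    rw [← div_le_iff₀ hm_pos]
    linarith [gVol_excSet_div_le G (C := C) fun v _ => hp0 v]
end

section
/- Let G = (V,E) be a finite graph with m ≥ 1 edges in which every vertex has degree at least 1, let p : V → ℝ_{≥0} satisfy Σ_{v∈V} p(v) ≤ 1, define exc(v) = p(v) − deg(v)/(2m), and let S = {v ∈ V : exc(v) ≥ deg(v)/(100m)}. Suppose Σ_{v∈S} exc(v) ≥ 1/10. For each positive integer i let B_i = {v ∈ S : 2^{−i} < exc(v)/deg(v) ≤ 2^{−i+1}}. Then there exists an integer i with 1 ≤ i ≤ ⌊log₂(50m)⌋ such that Σ_{v∈B_i} exc(v) ≥ 1/(50·⌊log₂(50m)⌋) and Σ_{v∈B_i} deg(v) ≥ 2^{i−1}/(50·⌊log₂(50m)⌋).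 -/
/-- The bucket `B_i = {v ∈ S : 2^{−i} < exc(v)/deg(v) ≤ 2^{−i+1}}`. -/
noncomputable def excBucket {V : Type*} [Fintype V] [DecidableEq V] (G : SimpleGraph V)
    [DecidableRel G.Adj] (p : V → ℝ) (i : ℕ) : Finset V :=
  (excSet G p).filter
    (fun v => ((2 : ℝ) ^ i)⁻¹ < exc G p v / (G.degree v : ℝ) ∧
      exc G p v / (G.degree v : ℝ) ≤ ((2 : ℝ) ^ (i - 1))⁻¹)

/-!
Group the vertices dyadically by the ratio `exc / deg`, which is at most `1`. With
`L = ⌊log₂(50m)⌋`, the vertices of ratio at most `2⁻ᴸ` have total excess at most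
`2m / 2ᴸ ≤ 4/50`, so the buckets `1, …, L` together carry excess at least `1/50` and one of them
carries at least `1/(50L)`. On bucket `i` the degree is at least `2ⁱ⁻¹` times the excess.
-/

theorem exists_mem_Icc_lt_and_le_pred {α : Type*} [LinearOrder α] {f : ℕ → α} {a : α} {L : ℕ}
    (h0 : a ≤ f 0) (hL : f L < a) : ∃ i ∈ Finset.Icc 1 L, f i < a ∧ a ≤ f (i - 1) := by
  have hex : ∃ i, f i < a := ⟨L, hL⟩
  have hpos : 0 < Nat.find hex := (Nat.find_pos hex).2 h0.not_gt
  exact ⟨Nat.find hex, Finset.mem_Icc.2 ⟨hpos, Nat.find_min' hex hL⟩, Nat.find_spec hex,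
    not_lt.1 (Nat.find_min hex (Nat.sub_one_lt_of_lt hpos))⟩

section DyadicBucket

variable {ι K : Type*} [Field K] [LinearOrder K] {s : Finset ι} {x w : ι → K} {i L : ℕ} {v : ι}

/-- The `i`-th dyadic bucket of `s`: the indices at which the ratio of the mass `x` to the weight
`w` lies in `(2⁻ⁱ, 2⁻⁽ⁱ⁻¹⁾]`. It is meant for `1 ≤ i`; bucket `0` is empty, as `0 - 1 = 0`. -/
def dyadicBucket (s : Finset ι) (x w : ι → K) (i : ℕ) : Finset ι :=
  s.filter fun v => ((2 : K) ^ i)⁻¹ < x v / w v ∧ x v / w v ≤ ((2 : K) ^ (i - 1))⁻¹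

theorem mem_dyadicBucket : v ∈ dyadicBucket s x w i ↔
    v ∈ s ∧ ((2 : K) ^ i)⁻¹ < x v / w v ∧ x v / w v ≤ ((2 : K) ^ (i - 1))⁻¹ :=
  Finset.mem_filter

theorem dyadicBucket_subset : dyadicBucket s x w i ⊆ s :=
  Finset.filter_subset _ _

variable [IsStrictOrderedRing K]

theorem div_pos_of_mem_dyadicBucket (hv : v ∈ dyadicBucket s x w i) : 0 < x v / w v :=
  (inv_pos.2 (by positivity)).trans (mem_dyadicBucket.1 hv).2.1

theorem pos_of_mem_dyadicBucket (hw : 0 ≤ w v) (hv : v ∈ dyadicBucket s x w i) :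
    0 < x v ∧ 0 < w v :=
  (div_pos_iff.1 (div_pos_of_mem_dyadicBucket hv)).resolve_right fun h => h.2.not_ge hw

theorem two_pow_mul_le_of_mem_dyadicBucket (hw : 0 ≤ w v) (hv : v ∈ dyadicBucket s x w i) :
    2 ^ (i - 1) * x v ≤ w v := by
  have hratio := (mem_dyadicBucket.1 hv).2.2
  rwa [div_le_iff₀ (pos_of_mem_dyadicBucket hw hv).2, le_inv_mul_iff₀ (by positivity)] at hratio

theorem two_pow_mul_sum_dyadicBucket_le (hw : ∀ v ∈ s, 0 ≤ w v) :
    2 ^ (i - 1) * ∑ v ∈ dyadicBucket s x w i, x v ≤ ∑ v ∈ dyadicBucket s x w i, w v := by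
  rw [Finset.mul_sum]
  exact Finset.sum_le_sum fun v hv =>
    two_pow_mul_le_of_mem_dyadicBucket (hw v (dyadicBucket_subset hv)) hv

theorem exists_mem_dyadicBucket_of_div_two_pow_lt (hv : v ∈ s) (hw : 0 ≤ w v) (hxw : x v ≤ w v)
    (hlt : w v / 2 ^ L < x v) : ∃ i ∈ Finset.Icc 1 L, v ∈ dyadicBucket s x w i := by
  have hx_pos : 0 < x v := (by positivity : 0 ≤ w v / 2 ^ L).trans_lt hlt
  have hw_pos : 0 < w v := hx_pos.trans_le hxw
  have hratio_le : x v / w v ≤ ((2 : K) ^ 0)⁻¹ := by simpa using div_le_one_of_le₀ hxw hw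
  have hratio_gt : ((2 : K) ^ L)⁻¹ < x v / w v := by
    rwa [lt_div_iff₀ hw_pos, inv_mul_eq_div]
  obtain ⟨i, hi, hbounds⟩ :=
    exists_mem_Icc_lt_and_le_pred (f := fun i => ((2 : K) ^ i)⁻¹) hratio_le hratio_gt
  exact ⟨i, hi, mem_dyadicBucket.2 ⟨hv, hbounds⟩⟩

theorem le_sum_ite_mem_dyadicBucket_add [DecidableEq ι] (hv : v ∈ s) (hw : 0 ≤ w v)
    (hxw : x v ≤ w v) :
    x v ≤ ∑ i ∈ Finset.Icc 1 L, (if v ∈ dyadicBucket s x w i then x v else 0) + w v / 2 ^ L := by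
  have hterm_nonneg : ∀ i ∈ Finset.Icc 1 L,
      0 ≤ if v ∈ dyadicBucket s x w i then x v else 0 := by
    intro i _
    split_ifs with hmem
    exacts [(pos_of_mem_dyadicBucket hw hmem).1.le, le_rfl]
  rcases le_or_gt (x v) (w v / 2 ^ L) with hsmall | hlarge
  · exact le_add_of_nonneg_of_le (Finset.sum_nonneg hterm_nonneg) hsmall
  · obtain ⟨i, hi, hmem⟩ := exists_mem_dyadicBucket_of_div_two_pow_lt hv hw hxw hlarge
    have hle := Finset.single_le_sum hterm_nonneg hi
    rw [if_pos hmem] at hle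
    exact le_add_of_le_of_nonneg hle (by positivity)

theorem sum_le_sum_dyadicBucket_add (hw : ∀ v ∈ s, 0 ≤ w v) (hxw : ∀ v ∈ s, x v ≤ w v) :
    ∑ v ∈ s, x v ≤
      ∑ i ∈ Finset.Icc 1 L, ∑ v ∈ dyadicBucket s x w i, x v + (∑ v ∈ s, w v) / 2 ^ L := by
  classical
  have hsum_ite (i : ℕ) : ∑ v ∈ s, (if v ∈ dyadicBucket s x w i then x v else 0) =
      ∑ v ∈ dyadicBucket s x w i, x v := by
    rw [Finset.sum_ite_mem, Finset.inter_eq_right.2 dyadicBucket_subset]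
  calc ∑ v ∈ s, x v
      ≤ ∑ v ∈ s, (∑ i ∈ Finset.Icc 1 L, (if v ∈ dyadicBucket s x w i then x v else 0) +
          w v / 2 ^ L) :=
        Finset.sum_le_sum fun v hv => le_sum_ite_mem_dyadicBucket_add hv (hw v hv) (hxw v hv)
    _ = ∑ i ∈ Finset.Icc 1 L, ∑ v ∈ dyadicBucket s x w i, x v + (∑ v ∈ s, w v) / 2 ^ L := by
        rw [Finset.sum_add_distrib, Finset.sum_comm, ← Finset.sum_div]
        simp only [hsum_ite]

theorem exists_le_sum_dyadicBucket {δ : K} (hL : 0 < L) (hw : ∀ v ∈ s, 0 ≤ w v)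
    (hxw : ∀ v ∈ s, x v ≤ w v) (hδ : L * δ + (∑ v ∈ s, w v) / 2 ^ L ≤ ∑ v ∈ s, x v) :
    ∃ i ∈ Finset.Icc 1 L, δ ≤ ∑ v ∈ dyadicBucket s x w i, x v ∧
      2 ^ (i - 1) * δ ≤ ∑ v ∈ dyadicBucket s x w i, w v := by
  have htotal : ∑ _i ∈ Finset.Icc 1 L, δ ≤
      ∑ i ∈ Finset.Icc 1 L, ∑ v ∈ dyadicBucket s x w i, x v := by
    rw [Finset.sum_const, Nat.card_Icc, Nat.add_sub_cancel, nsmul_eq_mul]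
    exact le_of_add_le_add_right (hδ.trans (sum_le_sum_dyadicBucket_add hw hxw))
  obtain ⟨i, hi, hmass⟩ := Finset.exists_le_of_sum_le (Finset.nonempty_Icc.2 hL) htotal
  exact ⟨i, hi, hmass,
    (mul_le_mul_of_nonneg_left hmass (by positivity)).trans (two_pow_mul_sum_dyadicBucket_le hw)⟩

end DyadicBucket

section Excess

variable {V : Type*} [Fintype V] (G : SimpleGraph V) [DecidableRel G.Adj]

theorem sum_degree_le_two_mul_card_edgeFinset (T : Finset V) :
    ∑ v ∈ T, G.degree v ≤ 2 * G.edgeFinset.card :=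
  (Finset.sum_le_sum_of_subset (Finset.subset_univ T)).trans_eq G.sum_degrees_eq_twice_card_edges

theorem sum_degree_div_two_pow_log_le (T : Finset V) {k : ℕ} (hk : 0 < k) :
    (∑ v ∈ T, (G.degree v : ℝ)) / 2 ^ Nat.log 2 (k * G.edgeFinset.card) ≤ 4 / k := by
  set m := G.edgeFinset.card
  set L := Nat.log 2 (k * m)
  have hdeg : ∑ v ∈ T, (G.degree v : ℝ) ≤ 2 * m :=
    mod_cast sum_degree_le_two_mul_card_edgeFinset G T
  have hpow : (k * m : ℝ) < 2 ^ L * 2 :=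
    mod_cast pow_succ 2 L ▸ Nat.lt_pow_succ_log_self one_lt_two (k * m)
  rw [div_le_div_iff₀ (by positivity) (by positivity)]
  calc (∑ v ∈ T, (G.degree v : ℝ)) * k ≤ 2 * m * k := by gcongr
    _ ≤ 4 * 2 ^ L := by linarith

variable [DecidableEq V] (p : V → ℝ)

theorem excBucket_eq_dyadicBucket (i : ℕ) :
    excBucket G p i = dyadicBucket (excSet G p) (exc G p) (fun v => (G.degree v : ℝ)) i :=
  rfl

theorem exc_le (v : V) : exc G p v ≤ p v :=
  sub_le_self _ (by positivity)

theorem good_bucket_exists_general (hm : 1 ≤ G.edgeFinset.card) (hp : ∀ v, p v ≤ G.degree v)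
    (hS : (1 : ℝ) / 10 ≤ ∑ v ∈ excSet G p, exc G p v) :
    ∃ i : ℕ, 1 ≤ i ∧ i ≤ Nat.log 2 (50 * G.edgeFinset.card) ∧
      (1 / (50 * (Nat.log 2 (50 * G.edgeFinset.card) : ℝ)) ≤
        ∑ v ∈ excBucket G p i, exc G p v) ∧
      ((2 : ℝ) ^ (i - 1) / (50 * (Nat.log 2 (50 * G.edgeFinset.card) : ℝ)) ≤
        ∑ v ∈ excBucket G p i, (G.degree v : ℝ)) := by
  have htail := sum_degree_div_two_pow_log_le G (excSet G p) (k := 50) (by norm_num)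
  have hL : 0 < Nat.log 2 (50 * G.edgeFinset.card) := Nat.log_pos one_lt_two (by lia)
  set L := Nat.log 2 (50 * G.edgeFinset.card)
  have hshare : (L : ℝ) * (1 / (50 * L)) = 1 / 50 := by field_simp
  obtain ⟨i, hi, hmass, hvol⟩ := exists_le_sum_dyadicBucket (s := excSet G p)
    (δ := 1 / (50 * (L : ℝ))) hL
    (fun v _ => Nat.cast_nonneg (G.degree v)) (fun v _ => (exc_le G p v).trans (hp v))
    (by rw [hshare]; push_cast at htail; linarith)
  rw [← excBucket_eq_dyadicBucket] at hmass hvol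
  rw [mul_one_div] at hvol
  exact ⟨i, (Finset.mem_Icc.1 hi).1, (Finset.mem_Icc.1 hi).2, hmass, hvol⟩

end Excess

/-- **A good excess bucket exists.**  Let `G` have `m ≥ 1` edges and minimum degree
at least `1`, let `p : V → ℝ≥0` with `Σ p ≤ 1`, and suppose the set
`S = {v : exc(v) ≥ deg(v)/(100m)}` satisfies `exc(S) ≥ 1/10`.  Then there is an
integer `1 ≤ i ≤ ⌊log₂(50m)⌋` with `exc(B_i) ≥ 1/(50·⌊log₂(50m)⌋)` and
`vol(B_i) ≥ 2^{i−1}/(50·⌊log₂(50m)⌋)`. -/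
theorem good_bucket_exists {V : Type*} [Fintype V] [DecidableEq V]
    (G : SimpleGraph V) [DecidableRel G.Adj]
    (hm : 1 ≤ G.edgeFinset.card)
    (hdeg : ∀ v : V, 1 ≤ G.degree v)
    (p : V → ℝ) (hp0 : ∀ v, 0 ≤ p v) (hpsum : ∑ v, p v ≤ 1)
    (hS : (1 : ℝ) / 10 ≤ ∑ v ∈ excSet G p, exc G p v) :
    ∃ i : ℕ, 1 ≤ i ∧ i ≤ Nat.log 2 (50 * G.edgeFinset.card) ∧
      (1 / (50 * (Nat.log 2 (50 * G.edgeFinset.card) : ℝ)) ≤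
        ∑ v ∈ excBucket G p i, exc G p v) ∧
      ((2 : ℝ) ^ (i - 1) / (50 * (Nat.log 2 (50 * G.edgeFinset.card) : ℝ)) ≤
        ∑ v ∈ excBucket G p i, (G.degree v : ℝ)) := by
  have hp1 (v : V) : p v ≤ 1 :=
    (Finset.single_le_sum (fun u _ => hp0 u) (Finset.mem_univ v)).trans hpsum
  exact good_bucket_exists_general G p hm (fun v => (hp1 v).trans (mod_cast hdeg v)) hS
end
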